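/- Let s ∈ ℂ, t > 0 with t ≥ 2σ‖W‖, and j ∈ [n]. Let z ∈ ℂ_{≤1}^n be the fixed point of G(·, s, t) and let z^{(−j)} ∈ ℂ_{≤1}^n be the fixed point of G^{(−j)}(·, s, t). Then for every r ∈ ℝ, (1/n)·Σ_{k=1}^n 1{σ·|[Wz]_k| ≥ |s| − r} ≤ (1/n)·Σ_{k=1}^n 1{σ·|[W z^{(−k)}]_k| ≥ |s| − r − 3σ‖W‖}, where for each k ∈ [n], z^{(−k)} denotes the fixed point of G^{(−k)}(·, s, t). -/

import Mathlib

open scoped Classical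
open Matrix

noncomputable section

namespace PhaseSync

/-- Euclidean norm of a complex vector. -/
def enorm {k : ℕ} (v : Fin k → ℂ) : ℝ := Real.sqrt (∑ i, ‖v i‖ ^ 2)

/-- Frobenius norm of a complex matrix. -/
def fnorm {k l : ℕ} (A : Matrix (Fin k) (Fin l) ℂ) : ℝ :=
  Real.sqrt (∑ i, ∑ j, ‖A i j‖ ^ 2)

/-- L2 operator norm of a square complex matrix. -/
def opNorm {k : ℕ} (A : Matrix (Fin k) (Fin k) ℂ) : ℝ :=
  ‖Matrix.toEuclideanCLM (𝕜 := ℂ) (n := Fin k) A‖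

/-- Indicator function of a proposition. -/
def ind (P : Prop) : ℝ := if P then 1 else 0

/-- The loss ℓ_m(V, z) = min_{a : ‖a‖=1} ‖V - a zᴴ‖_F² / n. -/
def lossM {k l : ℕ} (V : Matrix (Fin k) (Fin l) ℂ) (z : Fin l → ℂ) : ℝ :=
  sInf { r : ℝ | ∃ a : Fin k → ℂ, enorm a = 1 ∧
    r = fnorm (V - Matrix.vecMulVec a (star z)) ^ 2 / l }

/-- The loss ℓ_1(z', z) = min_{|a|=1} ‖z' - a z‖² / n. -/
def loss1 {l : ℕ} (z' z : Fin l → ℂ) : ℝ :=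
  sInf { r : ℝ | ∃ a : ℂ, ‖a‖ = 1 ∧ r = enorm (z' - a • z) ^ 2 / l }

/-- The mapping F₁: entrywise normalization of Y z. -/
def F1 {l : ℕ} (Y : Matrix (Fin l) (Fin l) ℂ) (z : Fin l → ℂ) : Fin l → ℂ :=
  fun j => if Y.mulVec z j ≠ 0 then Y.mulVec z j / (‖Y.mulVec z j‖ : ℂ) else z j

/-- jth column of a matrix. -/
def col {k l : ℕ} (A : Matrix (Fin k) (Fin l) ℂ) (j : Fin l) : Fin k → ℂ := fun i => A i j

/-- The mapping F_m: columnwise normalization of V Yᴴ. -/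
def Fm {k l : ℕ} (Y : Matrix (Fin l) (Fin l) ℂ) (V : Matrix (Fin k) (Fin l) ℂ) :
    Matrix (Fin k) (Fin l) ℂ :=
  Matrix.of fun i j =>
    if col (V * Yᴴ) j ≠ 0 then (V * Yᴴ) i j / ((enorm (col (V * Yᴴ) j) : ℝ) : ℂ) else V i j

/-- g_t(x) = x / max(|x|, t). -/
def gfun (t : ℝ) (x : ℂ) : ℂ := x / ((max (‖x‖) t : ℝ) : ℂ)

/-- The mapping G(z, s, t), coordinatewise g_t(z*_j s + σ [W z]_j). -/
def G {l : ℕ} (zstar : Fin l → ℂ) (σ : ℝ) (W : Matrix (Fin l) (Fin l) ℂ)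
    (z : Fin l → ℂ) (s : ℂ) (t : ℝ) : Fin l → ℂ :=
  fun j => gfun t (zstar j * s + (σ : ℂ) * W.mulVec z j)

/-- The mapping F₁'(z, s), entrywise normalization of z* s + σ W z. -/
def F1' {l : ℕ} (zstar : Fin l → ℂ) (σ : ℝ) (W : Matrix (Fin l) (Fin l) ℂ)
    (z : Fin l → ℂ) (s : ℂ) : Fin l → ℂ :=
  fun j =>
    if zstar j * s + (σ : ℂ) * W.mulVec z j ≠ 0 then
      (zstar j * s + (σ : ℂ) * W.mulVec z j) /
        ((‖zstar j * s + (σ : ℂ) * W.mulVec z j‖ : ℝ) : ℂ)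
    else z j

/-- W with jth row and column zeroed out. -/
def Wminus {l : ℕ} (W : Matrix (Fin l) (Fin l) ℂ) (j : Fin l) : Matrix (Fin l) (Fin l) ℂ :=
  Matrix.of fun k i => if k = j ∨ i = j then 0 else W k i

/-!
The map `x ↦ t * g_t x` is the metric projection onto the closed ball of radius `t`, so `g_t` is
`1/t`-Lipschitz. Let `y` be the leave-one-out fixed point at `k`, `u` the difference `z - y` with
its `k`-th entry erased, and `y₀` the vector `y` with its `k`-th entry erased. Away from `k` the two
fixed-point equations differ only by `σ W (z - y₀)`, and `‖z - y₀‖ ≤ ‖u‖ + |z_k| ≤ ‖u‖ + 1`, so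
`‖u‖ ≤ (σ ‖W‖ / t) (‖u‖ + 1) ≤ (‖u‖ + 1) / 2`, that is `‖u‖ ≤ 1`. The erased entry costs at most
`2`, whence `‖z - y‖ ≤ 3` and `[W z]_k` differs from `[W y]_k` by at most `3 ‖W‖`.
-/

section RadialProjection

open scoped RealInnerProductSpace

variable {E : Type*} [NormedAddCommGroup E] [InnerProductSpace ℝ E]

/-- The metric projection of a real inner product space onto the closed ball of radius `t` centred
at the origin, for `0 < t`; it equals `t • g_t` when `E = ℂ`. -/
def radialProj (t : ℝ) (x : E) : E := (t / max ‖x‖ t) • x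

lemma norm_radialProj_le {t : ℝ} (ht : 0 < t) (x : E) : ‖radialProj t x‖ ≤ t := by
  have hmax : 0 < max ‖x‖ t := lt_max_of_lt_right ht
  rw [radialProj, norm_smul, Real.norm_of_nonneg (by positivity), div_mul_eq_mul_div,
    div_le_iff₀ hmax]
  exact mul_le_mul_of_nonneg_left (le_max_left _ _) ht.le

lemma inner_sub_radialProj_nonpos {t : ℝ} (ht : 0 < t) (x : E) {w : E} (hw : ‖w‖ ≤ t) :
    ⟪x - radialProj t x, w - radialProj t x⟫ ≤ 0 := by
  rcases le_total ‖x‖ t with hx | hx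
  · simp [radialProj, max_eq_right hx, ht.ne']
  · have hx_pos : 0 < ‖x‖ := ht.trans_le hx
    set c := t / ‖x‖ with hc
    have hcx : c * ‖x‖ = t := div_mul_cancel₀ t hx_pos.ne'
    have hc_le : c ≤ 1 := div_le_one_of_le₀ hx hx_pos.le
    have inner_le : ⟪x, w⟫ ≤ c * ‖x‖ ^ 2 :=
      calc ⟪x, w⟫ ≤ ‖x‖ * ‖w‖ := real_inner_le_norm x w
        _ ≤ ‖x‖ * t := mul_le_mul_of_nonneg_left hw hx_pos.le
        _ = c * ‖x‖ ^ 2 := by rw [← hcx]; ring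
    calc ⟪x - radialProj t x, w - radialProj t x⟫ = (1 - c) * (⟪x, w⟫ - c * ‖x‖ ^ 2) := by
          simp only [radialProj, max_eq_left hx, ← hc, inner_sub_left, inner_sub_right,
            real_inner_smul_left, real_inner_smul_right, real_inner_self_eq_norm_sq, norm_smul,
            mul_pow, Real.norm_eq_abs, sq_abs]
          ring
      _ ≤ 0 := mul_nonpos_of_nonneg_of_nonpos (sub_nonneg.mpr hc_le) (sub_nonpos.mpr inner_le)

/-- The variational inequalities at `p` and `q` are those satisfied by the projections of `x` and
`y` onto a convex set. -/
lemma norm_sub_le_of_inner_sub_nonpos {x y p q : E} (hp : ⟪x - p, q - p⟫ ≤ 0)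
    (hq : ⟪y - q, p - q⟫ ≤ 0) : ‖p - q‖ ≤ ‖x - y‖ := by
  have sq_le_inner : ‖p - q‖ ^ 2 ≤ ⟪x - y, p - q⟫ := by
    rw [← real_inner_self_eq_norm_sq]
    simp only [inner_sub_left, inner_sub_right] at *
    linarith
  have sq_le_mul : ‖p - q‖ ^ 2 ≤ ‖x - y‖ * ‖p - q‖ :=
    sq_le_inner.trans (real_inner_le_norm _ _)
  rcases (norm_nonneg (p - q)).eq_or_lt with hpq | hpq
  · exact hpq ▸ norm_nonneg _
  · exact le_of_mul_le_mul_right (by rwa [← sq]) hpq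

lemma norm_radialProj_sub_le {t : ℝ} (ht : 0 < t) (x y : E) :
    ‖radialProj t x - radialProj t y‖ ≤ ‖x - y‖ :=
  norm_sub_le_of_inner_sub_nonpos
    (inner_sub_radialProj_nonpos ht x (norm_radialProj_le ht y))
    (inner_sub_radialProj_nonpos ht y (norm_radialProj_le ht x))

end RadialProjection

lemma gfun_eq_inv_smul_radialProj {t : ℝ} (ht : t ≠ 0) (x : ℂ) :
    gfun t x = t⁻¹ • radialProj t x := by
  rw [radialProj, smul_smul, div_eq_mul_inv, inv_mul_cancel_left₀ ht, gfun, Complex.real_smul,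
    Complex.ofReal_inv, div_eq_inv_mul]

lemma norm_gfun_sub_le {t : ℝ} (ht : 0 < t) (x y : ℂ) :
    ‖gfun t x - gfun t y‖ ≤ ‖x - y‖ / t := by
  rw [gfun_eq_inv_smul_radialProj ht.ne', gfun_eq_inv_smul_radialProj ht.ne', ← smul_sub,
    norm_smul, Real.norm_of_nonneg (inv_nonneg.mpr ht.le), div_eq_inv_mul]
  exact mul_le_mul_of_nonneg_left (norm_radialProj_sub_le ht x y) (inv_nonneg.mpr ht.le)

lemma norm_gfun_le_one (t : ℝ) (x : ℂ) : ‖gfun t x‖ ≤ 1 := by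
  have hmax : 0 ≤ max ‖x‖ t := le_max_of_le_left (norm_nonneg x)
  rw [gfun, norm_div, Complex.norm_real, Real.norm_of_nonneg hmax]
  exact div_le_one_of_le₀ (le_max_left _ _) hmax

section EuclideanNorm

open WithLp (toLp)

variable {ι : Type*} [Fintype ι]

lemma norm_toLp_two_le_mul_norm_toLp_two {α β : ι → Type*} [∀ i, SeminormedAddCommGroup (α i)]
    [∀ i, SeminormedAddCommGroup (β i)] {u : ∀ i, α i} {v : ∀ i, β i} {c : ℝ} (hc : 0 ≤ c)
    (h : ∀ i, ‖u i‖ ≤ c * ‖v i‖) : ‖toLp 2 u‖ ≤ c * ‖toLp 2 v‖ := by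
  refine le_of_sq_le_sq ?_ (by positivity)
  rw [mul_pow, PiLp.norm_sq_eq_of_L2, PiLp.norm_sq_eq_of_L2, Finset.mul_sum]
  gcongr with i
  rw [← mul_pow]
  exact pow_le_pow_left₀ (norm_nonneg _) (h i) 2

lemma norm_toLp_le_norm_toLp_update_zero_add [DecidableEq ι] (p : ENNReal) [Fact (1 ≤ p)]
    {β : ι → Type*} [∀ i, SeminormedAddCommGroup (β i)] (v : ∀ i, β i) (k : ι) :
    ‖toLp p v‖ ≤ ‖toLp p (Function.update v k 0)‖ + ‖v k‖ := by
  have eq_add_single : toLp p v = toLp p (Function.update v k 0) + PiLp.single p k (v k) := by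
    ext i
    obtain rfl | hik := eq_or_ne i k
    · simp
    · simp [hik]
  calc ‖toLp p v‖ = ‖toLp p (Function.update v k 0) + PiLp.single p k (v k)‖ := by
        rw [← eq_add_single]
    _ ≤ ‖toLp p (Function.update v k 0)‖ + ‖PiLp.single p k (v k)‖ := norm_add_le _ _
    _ = ‖toLp p (Function.update v k 0)‖ + ‖v k‖ := by rw [PiLp.norm_single]

end EuclideanNorm

section LeaveOneOut

open WithLp (toLp)

variable {n : ℕ} {W : Matrix (Fin n) (Fin n) ℂ}

lemma opNorm_nonneg (W : Matrix (Fin n) (Fin n) ℂ) : 0 ≤ opNorm W := norm_nonneg _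

lemma norm_toLp_mulVec_le (W : Matrix (Fin n) (Fin n) ℂ) (v : Fin n → ℂ) :
    ‖toLp 2 (W *ᵥ v)‖ ≤ opNorm W * ‖toLp 2 v‖ :=
  (toEuclideanCLM (𝕜 := ℂ) W).le_opNorm (toLp 2 v)

lemma Wminus_mulVec_of_ne (W : Matrix (Fin n) (Fin n) ℂ) (y : Fin n → ℂ) {i k : Fin n}
    (hik : i ≠ k) : (Wminus W k *ᵥ y) i = (W *ᵥ Function.update y k 0) i := by
  simp only [mulVec, dotProduct]
  refine Finset.sum_congr rfl fun l _ => ?_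
  obtain rfl | hl := eq_or_ne l k <;> simp [Wminus, *]

variable {zstar z y : Fin n → ℂ} {σ t : ℝ} {s : ℂ} {k : Fin n}

lemma norm_apply_le_one_of_eq_G (hz : z = G zstar σ W z s t) (i : Fin n) : ‖z i‖ ≤ 1 := by
  rw [hz]
  exact norm_gfun_le_one t _

lemma norm_G_apply_sub_G_apply_le (hσ : 0 ≤ σ) (ht : 0 < t) (W W' : Matrix (Fin n) (Fin n) ℂ)
    (i : Fin n) :
    ‖G zstar σ W z s t i - G zstar σ W' y s t i‖ ≤ σ / t * ‖(W *ᵥ z) i - (W' *ᵥ y) i‖ := by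
  refine (norm_gfun_sub_le ht _ _).trans_eq ?_
  rw [add_sub_add_left_eq_sub, ← mul_sub, norm_mul, Complex.norm_real, Real.norm_of_nonneg hσ,
    mul_div_right_comm]

lemma norm_toLp_update_sub_le_mul (hσ : 0 ≤ σ) (ht : 0 < t) (hz : z = G zstar σ W z s t)
    (hy : y = G zstar σ (Wminus W k) y s t) :
    ‖toLp 2 (Function.update (z - y) k 0)‖ ≤
      σ / t * ‖toLp 2 (W *ᵥ (z - Function.update y k 0))‖ := by
  refine norm_toLp_two_le_mul_norm_toLp_two (by positivity) fun i => ?_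
  obtain rfl | hik := eq_or_ne i k
  · rw [Function.update_self, norm_zero]
    positivity
  · calc ‖Function.update (z - y) k 0 i‖
          = ‖G zstar σ W z s t i - G zstar σ (Wminus W k) y s t i‖ := by
          rw [Function.update_of_ne hik, ← hz, ← hy, Pi.sub_apply]
      _ ≤ σ / t * ‖(W *ᵥ z) i - (Wminus W k *ᵥ y) i‖ := norm_G_apply_sub_G_apply_le hσ ht _ _ i
      _ = σ / t * ‖(W *ᵥ (z - Function.update y k 0)) i‖ := by
          rw [Wminus_mulVec_of_ne W y hik, mulVec_sub, Pi.sub_apply]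

lemma norm_toLp_update_sub_le_one (hσ : 0 ≤ σ) (ht : 0 < t) (hWt : 2 * σ * opNorm W ≤ t)
    (hz : z = G zstar σ W z s t) (hy : y = G zstar σ (Wminus W k) y s t) :
    ‖toLp 2 (Function.update (z - y) k 0)‖ ≤ 1 := by
  set u := Function.update (z - y) k 0 with hu
  set v := z - Function.update y k 0 with hv
  have update_v : Function.update v k 0 = u := by
    ext i
    obtain rfl | hik := eq_or_ne i k
    · simp [hu]
    · simp [hu, hv, hik]
  have norm_v_le : ‖toLp 2 v‖ ≤ ‖toLp 2 u‖ + 1 :=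
    calc ‖toLp 2 v‖ ≤ ‖toLp 2 u‖ + ‖v k‖ :=
          update_v ▸ norm_toLp_le_norm_toLp_update_zero_add 2 v k
      _ = ‖toLp 2 u‖ + ‖z k‖ := by simp [hv]
      _ ≤ ‖toLp 2 u‖ + 1 := by gcongr; exact norm_apply_le_one_of_eq_G hz k
  have contraction_le_half : σ / t * opNorm W ≤ 1 / 2 := by
    rw [div_mul_eq_mul_div, div_le_iff₀ ht]
    linarith
  have norm_u_le : ‖toLp 2 u‖ ≤ 1 / 2 * (‖toLp 2 u‖ + 1) :=
    calc ‖toLp 2 u‖ ≤ σ / t * ‖toLp 2 (W *ᵥ v)‖ := norm_toLp_update_sub_le_mul hσ ht hz hy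
      _ ≤ σ / t * (opNorm W * ‖toLp 2 v‖) := by gcongr; exact norm_toLp_mulVec_le W v
      _ = σ / t * opNorm W * ‖toLp 2 v‖ := by ring
      _ ≤ 1 / 2 * (‖toLp 2 u‖ + 1) := by gcongr
  linarith

lemma norm_toLp_sub_le_three (hσ : 0 ≤ σ) (ht : 0 < t) (hWt : 2 * σ * opNorm W ≤ t)
    (hz : z = G zstar σ W z s t) (hy : y = G zstar σ (Wminus W k) y s t) :
    ‖toLp 2 (z - y)‖ ≤ 3 :=
  calc ‖toLp 2 (z - y)‖ ≤ ‖toLp 2 (Function.update (z - y) k 0)‖ + ‖z k - y k‖ :=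
        norm_toLp_le_norm_toLp_update_zero_add 2 (z - y) k
    _ ≤ 1 + (1 + 1) := add_le_add (norm_toLp_update_sub_le_one hσ ht hWt hz hy)
        (norm_sub_le_of_le (norm_apply_le_one_of_eq_G hz k) (norm_apply_le_one_of_eq_G hy k))
    _ = 3 := by norm_num

lemma norm_mulVec_apply_le_add (hσ : 0 ≤ σ) (ht : 0 < t) (hWt : 2 * σ * opNorm W ≤ t)
    (hz : z = G zstar σ W z s t) (hy : y = G zstar σ (Wminus W k) y s t) (i : Fin n) :
    ‖(W *ᵥ z) i‖ ≤ ‖(W *ᵥ y) i‖ + 3 * opNorm W := by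
  have norm_sub_le : ‖(W *ᵥ z) i - (W *ᵥ y) i‖ ≤ opNorm W * 3 :=
    calc ‖(W *ᵥ z) i - (W *ᵥ y) i‖ = ‖(W *ᵥ (z - y)) i‖ := by rw [mulVec_sub, Pi.sub_apply]
      _ ≤ ‖toLp 2 (W *ᵥ (z - y))‖ := PiLp.norm_apply_le (toLp 2 (W *ᵥ (z - y))) i
      _ ≤ opNorm W * ‖toLp 2 (z - y)‖ := norm_toLp_mulVec_le W (z - y)
      _ ≤ opNorm W * 3 := mul_le_mul_of_nonneg_left
          (norm_toLp_sub_le_three hσ ht hWt hz hy) (opNorm_nonneg W)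
  linarith [norm_sub_norm_le ((W *ᵥ z) i) ((W *ᵥ y) i)]

end LeaveOneOut

lemma ind_le_ind {P Q : Prop} (h : P → Q) : ind P ≤ ind Q := by
  by_cases hP : P
  · simp [ind, hP, h hP]
  · by_cases hQ : Q <;> simp [ind, hP, hQ]

theorem stmt4_general {n : ℕ} (zstar : Fin n → ℂ) {σ : ℝ} (hσ : 0 ≤ σ)
    (W : Matrix (Fin n) (Fin n) ℂ) (s : ℂ) {t : ℝ} (ht : 0 < t) (hWt : 2 * σ * opNorm W ≤ t)
    {z : Fin n → ℂ} (hz : z = G zstar σ W z s t) {zlo : Fin n → Fin n → ℂ}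
    (hzlo : ∀ k, zlo k = G zstar σ (Wminus W k) (zlo k) s t) (r : ℝ) :
    (1 / (n : ℝ)) * ∑ k, ind (‖s‖ - r ≤ σ * ‖(W *ᵥ z) k‖) ≤
      (1 / (n : ℝ)) * ∑ k, ind (‖s‖ - r - 3 * σ * opNorm W ≤ σ * ‖(W *ᵥ zlo k) k‖) := by
  gcongr with k
  refine ind_le_ind fun hk => ?_
  have scaled_bound : σ * ‖(W *ᵥ z) k‖ ≤ σ * (‖(W *ᵥ zlo k) k‖ + 3 * opNorm W) :=
    mul_le_mul_of_nonneg_left (norm_mulVec_apply_le_add hσ ht hWt hz (hzlo k) k) hσ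
  linarith

theorem stmt4 {n : ℕ} (hn : 1 ≤ n)
    (zstar : Fin n → ℂ) (hzstar : ∀ j, ‖zstar j‖ = 1)
    (σ : ℝ) (hσ : 0 < σ) (W : Matrix (Fin n) (Fin n) ℂ) (hW : W.IsHermitian)
    (s : ℂ) (t : ℝ) (ht : 0 < t) (ht2 : 2 * σ * opNorm W ≤ t) (j : Fin n)
    (z : Fin n → ℂ) (hz1 : ∀ i, ‖z i‖ ≤ 1) (hz2 : z = G zstar σ W z s t)
    (zlo : Fin n → (Fin n → ℂ))
    (hzlo : ∀ k : Fin n, (∀ i, ‖zlo k i‖ ≤ 1) ∧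
      zlo k = G zstar σ (Wminus W k) (zlo k) s t)
    (r : ℝ) :
    (1 / (n : ℝ)) * ∑ k : Fin n, ind (‖s‖ - r ≤ σ * ‖W.mulVec z k‖) ≤
      (1 / (n : ℝ)) * ∑ k : Fin n,
        ind (‖s‖ - r - 3 * σ * opNorm W ≤ σ * ‖W.mulVec (zlo k) k‖) :=
  stmt4_general zstar hσ.le W s ht ht2 hz2 (fun k => (hzlo k).2) r

end PhaseSync
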